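/- Let C be a complete set of diameter 1 in a Minkowski space and let K ⊆ C be a compact convex nonempty set. Then the following are equivalent: (I) C is the unique completion of K; (II) bh₁(K) = C; (III) K meets every exposed b-face of C. If, in addition, the norm is strictly convex, these are also equivalent to (IV) cl(conv(b-exp(C))) ⊆ K. -/

import Mathlib

/-!
Write `S'` for the ball intersection `⋂ s ∈ S, closedBall s 1`. Since `x ∈ S'` means
`S ⊆ closedBall x 1`, this is a polarity, `ballHull S = S''`, and complete sets `C` of diameter one
satisfy `C' = C`. Hence `ballHull K = C` amounts to `K' = C`. Here `C ⊆ K'` are closed and convex,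
and `interior K' = {x | K ⊆ ball x 1}`. The centers of the supporting spheres of `C` are its
frontier points, so (III) says that no frontier point of `C` lies in `interior K'`, which forces
`K' = C` because `interior K'` is connected.

For (I), each point of `K'` can be added to `K` without increasing a diameter of one, so uniqueness
of the completion forces `K' = C`. Conversely, if `K' = C`, then completions of `K` of diameter one
lie in `C`. Moreover `K ⊆ closedBall x d` with `d ≤ 1` implies `C ⊆ closedBall x d`: for `c ∈ C`,
moving `x` away from `c` by `1 - d` gives a point of `K' = C`, which is within one of `c`. Applied
with `d = diam K`, first to `x ∈ K` and then to `x ∈ C`, this gives `diam C ≤ diam K`.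

In a strictly convex space every point `c` of `C` farthest from some `x ∈ interior C` is b-exposed:
pushing `x` away from `c` to distance one, the unit sphere around the new point meets `C` only in
`c`. If `K` contains these points, then `C` and `K` are equally far from each `x ∈ interior C`, and
by density also from each frontier point of `C`.
-/

open Metric Set

/-- The ball hull of `S`: intersection of all closed balls of radius 1 containing `S`. -/
def ballHull {E : Type*} [NormedAddCommGroup E] (S : Set E) : Set E :=
  ⋂ x ∈ {x : E | S ⊆ closedBall x 1}, closedBall x 1

/-- The circumradius of `S`: the least `r ≥ 0` such that `S` is contained in some
closed ball of radius `r`. -/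
noncomputable def circumradius {E : Type*} [NormedAddCommGroup E] (S : Set E) : ℝ :=
  sInf {r : ℝ | 0 ≤ r ∧ ∃ x : E, S ⊆ closedBall x r}

/-- A b-convex body: a bounded nonempty set equal to its ball hull. -/
def IsBConvexBody {E : Type*} [NormedAddCommGroup E] (K : Set E) : Prop :=
  Bornology.IsBounded K ∧ K.Nonempty ∧ ballHull K = K

/-- `F` is an exposed b-face of `K`: `F = K ∩ S(y,1)` for some supporting sphere `S(y,1)`. -/
def IsExposedBFace {E : Type*} [NormedAddCommGroup E] (K F : Set E) : Prop :=
  ∃ y : E, K ⊆ closedBall y 1 ∧ (K ∩ sphere y 1).Nonempty ∧ F = K ∩ sphere y 1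

/-- The set of b-exposed points of `K`. -/
def bExp {E : Type*} [NormedAddCommGroup E] (K : Set E) : Set E :=
  {x : E | ∃ y : E, K ⊆ closedBall y 1 ∧ K ∩ sphere y 1 = {x}}

/-- A complete (diametrically maximal) set: bounded, nonempty, and adding any outside
point strictly increases the diameter. -/
def IsDiamComplete {E : Type*} [NormedAddCommGroup E] (C : Set E) : Prop :=
  Bornology.IsBounded C ∧ C.Nonempty ∧ ∀ x ∉ C, Metric.diam C < Metric.diam (C ∪ {x})

/-- `C` is a completion of `S`: `C` is complete, contains `S`, and has the same diameter. -/
def IsCompletion {E : Type*} [NormedAddCommGroup E] (C S : Set E) : Prop :=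
  IsDiamComplete C ∧ S ⊆ C ∧ Metric.diam C = Metric.diam S

/-- The ball intersection of `S` with radius `r`: the points at distance at most `r` from every
point of `S`. For `r = 1` it is the polarity underlying the ball hull; the complete sets of
diameter `r` are fixed by it. -/
def ballIntersection {E : Type*} [PseudoMetricSpace E] (S : Set E) (r : ℝ) : Set E :=
  ⋂ s ∈ S, closedBall s r

theorem eq_iff_disjoint_frontier_interior {E : Type*} [AddCommGroup E] [Module ℝ E]
    [TopologicalSpace E] [IsTopologicalAddGroup E] [ContinuousSMul ℝ E] {C D : Set E}
    (hC : IsClosed C) (hD : IsClosed D) (hDconv : Convex ℝ D) (hCD : C ⊆ D)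
    (hCint : (interior C).Nonempty) : D = C ↔ Disjoint (frontier C) (interior D) := by
  refine ⟨fun h => h ▸ disjoint_interior_frontier.symm, fun h => ?_⟩
  have hcover : interior D ⊆ interior C ∪ Cᶜ := by
    rw [hC.frontier_eq, disjoint_left] at h
    exact fun x hxD => or_iff_not_imp_left.2 fun hxi hxC => h ⟨hxC, hxi⟩ hxD
  have hint : interior D ⊆ interior C := hDconv.interior.isPreconnected.subset_left_of_subset_union
    isOpen_interior hC.isOpen_compl (disjoint_compl_right.mono_left interior_subset) hcover
    (hCint.mono fun _ hx => ⟨interior_mono hCD hx, hx⟩)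
  refine Subset.antisymm ?_ hCD
  calc
    D = closure (interior D) := by
      rw [hDconv.closure_interior_eq_closure_of_nonempty_interior
        (hCint.mono (interior_mono hCD)), hD.closure_eq]
    _ ⊆ C := closure_minimal (hint.trans interior_subset) hC

section PseudoMetric

variable {E : Type*} [PseudoMetricSpace E] {S T : Set E} {r : ℝ} {x : E}

theorem inter_sphere_nonempty_iff (h : S ⊆ closedBall x r) :
    (S ∩ sphere x r).Nonempty ↔ ¬S ⊆ ball x r := by
  simp only [not_subset, Set.Nonempty, mem_inter_iff, mem_sphere, mem_ball, not_lt]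
  exact exists_congr fun s => and_congr_right fun hs => (h hs).ge_iff_eq.symm

theorem mem_ballIntersection : x ∈ ballIntersection S r ↔ S ⊆ closedBall x r := by
  simp only [ballIntersection, mem_iInter₂, mem_closedBall, subset_def, dist_comm]

theorem ballIntersection_anti (h : S ⊆ T) : ballIntersection T r ⊆ ballIntersection S r :=
  biInter_subset_biInter_left h

theorem subset_ballIntersection_comm : S ⊆ ballIntersection T r ↔ T ⊆ ballIntersection S r := by
  have key : ∀ {A B : Set E}, A ⊆ ballIntersection B r → B ⊆ ballIntersection A r :=
    fun h t ht => mem_ballIntersection.2 fun s hs => mem_iInter₂.1 (h hs) t ht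
  exact ⟨key, key⟩

theorem ballIntersection_ballIntersection_ballIntersection :
    ballIntersection (ballIntersection (ballIntersection S r) r) r = ballIntersection S r :=
  (ballIntersection_anti (subset_ballIntersection_comm.1 Subset.rfl)).antisymm
    (subset_ballIntersection_comm.1 Subset.rfl)

theorem isClosed_ballIntersection : IsClosed (ballIntersection S r) :=
  isClosed_biInter fun _ _ => isClosed_closedBall

theorem subset_ballIntersection_diam (hS : Bornology.IsBounded S) :
    S ⊆ ballIntersection S (diam S) :=
  fun _ hx => mem_ballIntersection.2 fun _ hy => dist_le_diam_of_mem hS hy hx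

theorem diam_le_of_subset_ballIntersection (hr : 0 ≤ r) (hS : S ⊆ ballIntersection S r) :
    diam S ≤ r :=
  diam_le_of_forall_dist_le hr fun _ hx _ hy => mem_ballIntersection.1 (hS hy) hx

theorem isBounded_of_subset_ballIntersection (hS : S ⊆ ballIntersection S r) :
    Bornology.IsBounded S :=
  isBounded_iff.2 ⟨r, fun _ hx _ hy => mem_ballIntersection.1 (hS hy) hx⟩

theorem insert_subset_ballIntersection_insert (hr : 0 ≤ r) (hS : S ⊆ ballIntersection S r)
    (hx : x ∈ ballIntersection S r) : insert x S ⊆ ballIntersection (insert x S) r := by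
  have hxS : S ⊆ closedBall x r := mem_ballIntersection.1 hx
  simp only [ballIntersection, biInter_insert]
  exact insert_subset ⟨mem_closedBall_self hr, hx⟩ (subset_inter hxS hS)

theorem exists_superset_ballIntersection_eq (hr : 0 ≤ r) (hS : S ⊆ ballIntersection S r) :
    ∃ D, S ⊆ D ∧ ballIntersection D r = D := by
  obtain ⟨D, hSD, hD⟩ := zorn_subset_nonempty {T : Set E | T ⊆ ballIntersection T r} (by
    refine fun c hc hchain _ => ⟨⋃₀ c, ?_, fun _ => subset_sUnion_of_mem⟩
    rintro x ⟨s, hs, hxs⟩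
    refine mem_ballIntersection.2 ?_
    rintro y ⟨t, ht, hyt⟩
    obtain ⟨u, hu, hsu, htu⟩ := hchain.directedOn s hs t ht
    exact mem_ballIntersection.1 (hc hu (hsu hxs)) (htu hyt)) S hS
  refine ⟨D, hSD, Subset.antisymm (fun x hx => ?_) hD.prop⟩
  exact hD.le_of_ge (insert_subset_ballIntersection_insert hr hD.prop hx) (subset_insert x D)
    (mem_insert x D)

theorem isCompact_of_ballIntersection_eq [ProperSpace E] (hS : ballIntersection S r = S) :
    IsCompact S :=
  isCompact_of_isClosed_isBounded (hS ▸ isClosed_ballIntersection)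
    (isBounded_of_subset_ballIntersection hS.ge)

end PseudoMetric

section NormedSpace

variable {E : Type*} [NormedAddCommGroup E] [NormedSpace ℝ E] {C K S : Set E} {d r : ℝ} {x : E}

theorem convex_ballIntersection : Convex ℝ (ballIntersection S r) :=
  convex_iInter₂ fun s _ => convex_closedBall s r

theorem exists_subset_ball_of_isCompact (hr : 0 < r) (hS : IsCompact S)
    (hSr : S ⊆ ballIntersection S r) : ∃ x, S ⊆ ball x r := by
  rcases S.eq_empty_or_nonempty with rfl | ⟨s₀, hs₀⟩
  · exact ⟨0, empty_subset _⟩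
  -- Two such centers may be replaced by their midpoint, as no point of `S` is at distance `> r`.
  suffices h : ∃ x ∈ ballIntersection S r, S ∩ S ⊆ ball x r by
    simpa only [inter_self] using h.imp fun _ => And.right
  refine hS.induction_on (p := fun t => ∃ x ∈ ballIntersection S r, t ∩ S ⊆ ball x r)
    ⟨s₀, hSr hs₀, by simp only [empty_inter, empty_subset]⟩
    (fun t u htu ⟨x, hx, hux⟩ => ⟨x, hx, (inter_subset_inter_left S htu).trans hux⟩) ?_
    (fun s hs => ⟨ball s r, mem_nhdsWithin_of_mem_nhds (ball_mem_nhds s hr), s, hSr hs,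
      inter_subset_left⟩)
  rintro t u ⟨x, hx, htx⟩ ⟨y, hy, huy⟩
  refine ⟨midpoint ℝ x y, convex_ballIntersection.midpoint_mem hx hy, ?_⟩
  rintro s ⟨hstu, hs⟩
  have hsx : dist x s ≤ r := mem_closedBall'.1 (mem_ballIntersection.1 hx hs)
  have hsy : dist y s ≤ r := mem_closedBall'.1 (mem_ballIntersection.1 hy hs)
  have hmid : dist (midpoint ℝ x y) s ≤ (dist x s + dist y s) / 2 := by
    simpa only [midpoint_self] using dist_midpoint_midpoint_le x y s s
  rw [mem_ball']
  rcases hstu with hst | hsu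
  · have : dist x s < r := mem_ball'.1 (htx ⟨hst, hs⟩)
    linarith
  · have : dist y s < r := mem_ball'.1 (huy ⟨hsu, hs⟩)
    linarith

section Nontrivial

variable [Nontrivial E]

theorem exists_dist_eq_and_dist_eq_add (hr : 0 ≤ r) (x y : E) :
    ∃ z, dist z x = r ∧ dist z y = r + dist x y := by
  obtain ⟨v, hv, hray⟩ : ∃ v : E, ‖v‖ = r ∧ SameRay ℝ v (x - y) := by
    by_cases hxy : x - y = 0
    · obtain ⟨v, hv⟩ := exists_norm_eq E hr
      exact ⟨v, hv, hxy ▸ SameRay.zero_right v⟩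
    · refine ⟨(r / ‖x - y‖) • (x - y), ?_, SameRay.sameRay_nonneg_smul_left _ (by positivity)⟩
      rw [norm_smul, Real.norm_of_nonneg (by positivity),
        div_mul_cancel₀ _ (norm_ne_zero_iff.2 hxy)]
  refine ⟨x + v, by rw [dist_eq_norm, add_sub_cancel_left, hv], ?_⟩
  rw [dist_eq_norm, dist_eq_norm, add_sub_right_comm, hray.symm.norm_add, hv, add_comm]

theorem ballIntersection_subset_of_radius_le (hdr : d ≤ r)
    (h : ballIntersection K r ⊆ ballIntersection C r) :
    ballIntersection K d ⊆ ballIntersection C d := by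
  intro x hx
  rw [mem_ballIntersection] at hx ⊢
  intro c hc
  obtain ⟨z, hzx, hzc⟩ := exists_dist_eq_and_dist_eq_add (sub_nonneg.2 hdr) x c
  have hzK : z ∈ ballIntersection K r :=
    mem_ballIntersection.2 (hx.trans (closedBall_subset_closedBall' (by
      rw [dist_comm, hzx, add_sub_cancel])))
  have hzr : dist z c ≤ r := mem_closedBall'.1 (mem_ballIntersection.1 (h hzK) hc)
  rw [mem_closedBall']
  linarith

theorem interior_ballIntersection [ProperSpace E] (hS : IsClosed S) :
    interior (ballIntersection S r) = {x | S ⊆ ball x r} := by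
  refine Subset.antisymm (fun x hx s hs => ?_) (fun x hx => ?_)
  · have hxs : x ∈ interior (closedBall s r) := interior_mono (biInter_subset_of_mem hs) hx
    rwa [interior_closedBall', mem_ball_comm] at hxs
  · obtain ⟨d, hdr, hSd⟩ := exists_lt_subset_ball hS hx
    refine mem_interior_iff_mem_nhds.2
      (Filter.mem_of_superset (ball_mem_nhds x (sub_pos.2 hdr)) fun y hy => ?_)
    refine mem_ballIntersection.2 (hSd.trans (ball_subset_closedBall.trans
      (closedBall_subset_closedBall' ?_)))
    linarith [mem_ball'.1 hy]

theorem mem_frontier_ballIntersection [ProperSpace E] (hS : IsClosed S) :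
    x ∈ frontier (ballIntersection S r) ↔ S ⊆ closedBall x r ∧ (S ∩ sphere x r).Nonempty := by
  rw [isClosed_ballIntersection.frontier_eq, interior_ballIntersection hS, mem_sdiff,
    mem_ballIntersection]
  exact and_congr_right fun h => (inter_sphere_nonempty_iff h).symm

theorem interior_nonempty_of_ballIntersection_eq [ProperSpace E] (hr : 0 < r)
    (hS : ballIntersection S r = S) : (interior S).Nonempty := by
  have hScomp := isCompact_of_ballIntersection_eq hS
  obtain ⟨x, hx⟩ := exists_subset_ball_of_isCompact hr hScomp hS.ge
  exact ⟨x, by rwa [← hS, interior_ballIntersection hScomp.isClosed]⟩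

theorem ballIntersection_eq_iff_disjoint_frontier [ProperSpace E] (hr : 0 < r)
    (hC : ballIntersection C r = C) (hKC : K ⊆ C) :
    ballIntersection K r = C ↔ Disjoint (frontier C) (interior (ballIntersection K r)) :=
  eq_iff_disjoint_frontier_interior (isCompact_of_ballIntersection_eq hC).isClosed
    isClosed_ballIntersection convex_ballIntersection (hC.ge.trans (ballIntersection_anti hKC))
    (interior_nonempty_of_ballIntersection_eq hr hC)

end Nontrivial

end NormedSpace

section Completion

variable {E : Type*} [NormedAddCommGroup E] {C K S : Set E}

theorem isDiamComplete_iff : IsDiamComplete C ↔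
    Bornology.IsBounded C ∧ C.Nonempty ∧ ballIntersection C (diam C) = C := by
  refine and_congr_right fun hbdd => and_congr_right fun _ => ?_
  have hCsub := subset_ballIntersection_diam hbdd
  rw [← hCsub.ge_iff_eq']
  refine forall_congr' fun x => ?_
  rw [← not_imp_not, not_not, not_lt, union_singleton]
  refine imp_congr_left ⟨fun hx => ?_, fun hx => ?_⟩
  · refine mem_ballIntersection.2 fun y hy => ?_
    exact (dist_le_diam_of_mem (hbdd.insert x) (mem_insert_of_mem x hy) (mem_insert x C)).trans hx
  · exact diam_le_of_subset_ballIntersection diam_nonneg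
      (insert_subset_ballIntersection_insert diam_nonneg hCsub hx)

theorem IsDiamComplete.ballIntersection_diam_eq (hC : IsDiamComplete C) :
    ballIntersection C (diam C) = C :=
  (isDiamComplete_iff.1 hC).2.2

theorem exists_isCompletion (hS : Bornology.IsBounded S) (hne : S.Nonempty) :
    ∃ D, IsCompletion D S := by
  obtain ⟨D, hSD, hD⟩ :=
    exists_superset_ballIntersection_eq diam_nonneg (subset_ballIntersection_diam hS)
  have hDbdd := isBounded_of_subset_ballIntersection hD.ge
  have hdiam : diam D = diam S :=
    (diam_le_of_subset_ballIntersection diam_nonneg hD.ge).antisymm (diam_mono hSD hDbdd)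
  exact ⟨D, isDiamComplete_iff.2 ⟨hDbdd, hne.mono hSD, by rwa [hdiam]⟩, hSD, hdiam⟩

theorem ballIntersection_subset_of_unique_completion (hC : IsCompletion C K)
    (huniq : ∀ D, IsCompletion D K → D = C) : ballIntersection K (diam C) ⊆ C := by
  obtain ⟨⟨hCbdd, -, -⟩, hKC, hdiam⟩ := hC
  have hKbdd := hCbdd.subset hKC
  rw [hdiam]
  intro x hx
  have hinsert : diam (insert x K) = diam K :=
    (diam_le_of_subset_ballIntersection diam_nonneg (insert_subset_ballIntersection_insert
      diam_nonneg (subset_ballIntersection_diam hKbdd) hx)).antisymm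
      (diam_mono (subset_insert x K) (hKbdd.insert x))
  obtain ⟨D, hD, hxKD, hDdiam⟩ := exists_isCompletion (hKbdd.insert x) (insert_nonempty x K)
  obtain rfl : D = C := huniq D ⟨hD, (subset_insert x K).trans hxKD, hDdiam.trans hinsert⟩
  exact hxKD (mem_insert x K)

theorem diam_eq_of_ballIntersection_eq [NormedSpace ℝ E] [Nontrivial E]
    (hC : IsDiamComplete C) (hKC : K ⊆ C) (h : ballIntersection K (diam C) = C) :
    diam C = diam K := by
  have hdle : diam K ≤ diam C := diam_mono hKC hC.1
  have hsub : ballIntersection K (diam K) ⊆ ballIntersection C (diam K) :=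
    ballIntersection_subset_of_radius_le hdle (h.trans hC.ballIntersection_diam_eq.symm).le
  have hKCd : K ⊆ ballIntersection C (diam K) :=
    (subset_ballIntersection_diam (hC.1.subset hKC)).trans hsub
  have hCC : C ⊆ ballIntersection C (diam K) :=
    (subset_ballIntersection_comm.1 hKCd).trans hsub
  exact (diam_le_of_subset_ballIntersection diam_nonneg hCC).antisymm hdle

theorem unique_completion_iff_ballIntersection_eq [NormedSpace ℝ E] [Nontrivial E]
    (hC : IsDiamComplete C) (hKC : K ⊆ C) :
    (IsCompletion C K ∧ ∀ D, IsCompletion D K → D = C) ↔ ballIntersection K (diam C) = C := by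
  constructor
  · rintro ⟨hcompl, huniq⟩
    exact (ballIntersection_subset_of_unique_completion hcompl huniq).antisymm
      (hC.ballIntersection_diam_eq.ge.trans (ballIntersection_anti hKC))
  · intro h
    have hdiam := diam_eq_of_ballIntersection_eq hC hKC h
    refine ⟨⟨hC, hKC, hdiam⟩, fun D ⟨hD, hKD, hDdiam⟩ => ?_⟩
    have hDfix : ballIntersection D (diam C) = D :=
      (hDdiam.trans hdiam.symm) ▸ hD.ballIntersection_diam_eq
    have hDC : D ⊆ C := hDfix.ge.trans ((ballIntersection_anti hKD).trans h.le)
    exact hDC.antisymm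
      (hC.ballIntersection_diam_eq.ge.trans ((ballIntersection_anti hDC).trans hDfix.le))

end Completion

section BallHull

variable {E : Type*} [NormedAddCommGroup E] {C K : Set E} {c x : E}

theorem ballHull_eq_ballIntersection :
    ballHull K = ballIntersection (ballIntersection K 1) 1 := by
  simp only [ballHull, ballIntersection, ← mem_ballIntersection, mem_ofPred_eq]

theorem ballHull_eq_iff_ballIntersection_eq (hC : ballIntersection C 1 = C) :
    ballHull K = C ↔ ballIntersection K 1 = C := by
  rw [ballHull_eq_ballIntersection]
  refine ⟨fun h => ?_, fun h => by rw [h, hC]⟩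
  rw [← ballIntersection_ballIntersection_ballIntersection, h, hC]

theorem bExp_subset_of_forall_isExposedBFace
    (h : ∀ F, IsExposedBFace C F → (K ∩ F).Nonempty) : bExp C ⊆ K := by
  rintro c ⟨x, hCx, hc⟩
  exact inter_singleton_nonempty.1
    (h {c} ⟨x, hCx, hc ▸ singleton_nonempty c, hc.symm⟩)

variable [NormedSpace ℝ E] [Nontrivial E]

theorem forall_isExposedBFace_iff_disjoint_frontier [ProperSpace E]
    (hC : ballIntersection C 1 = C) (hK : IsClosed K) (hKC : K ⊆ C) :
    (∀ F, IsExposedBFace C F → (K ∩ F).Nonempty) ↔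
      Disjoint (frontier C) (interior (ballIntersection K 1)) := by
  have hfrontier : ∀ x, x ∈ frontier C ↔ C ⊆ closedBall x 1 ∧ (C ∩ sphere x 1).Nonempty := by
    intro x
    have hmem := mem_frontier_ballIntersection (r := 1) (x := x)
      (isCompact_of_ballIntersection_eq hC).isClosed
    rwa [hC] at hmem
  have hfaces : (∀ F, IsExposedBFace C F → (K ∩ F).Nonempty) ↔
      ∀ x ∈ frontier C, (K ∩ sphere x 1).Nonempty := by
    simp only [hfrontier, IsExposedBFace]
    constructor
    · intro h x hx
      simpa only [← inter_assoc, inter_eq_left.2 hKC] using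
        h (C ∩ sphere x 1) ⟨x, hx.1, hx.2, rfl⟩
    · rintro h F ⟨x, hCx, hne, rfl⟩
      simpa only [← inter_assoc, inter_eq_left.2 hKC] using h x ⟨hCx, hne⟩
  rw [hfaces, interior_ballIntersection hK, disjoint_left]
  exact forall₂_congr fun x hx => inter_sphere_nonempty_iff (hKC.trans ((hfrontier x).1 hx).1)

variable [StrictConvexSpace ℝ E]

theorem mem_bExp_of_subset_closedBall (hc : c ∈ C) (hCx : C ⊆ closedBall x (dist x c))
    (hlt : dist x c < 1) : c ∈ bExp C := by
  obtain ⟨z, hzx, hzc⟩ := exists_dist_eq_and_dist_eq_add (sub_pos.2 hlt).le x c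
  rw [sub_add_cancel] at hzc
  refine ⟨z, hCx.trans (closedBall_subset_closedBall' ?_), ?_⟩
  · rw [dist_comm x z, hzx, add_sub_cancel]
  refine eq_singleton_iff_unique_mem.2 ⟨⟨hc, mem_sphere'.2 hzc⟩, fun c' ⟨hc', hzc'⟩ => ?_⟩
  rw [mem_sphere'] at hzc'
  have hxc' : dist x c' = dist x c := (mem_closedBall'.1 (hCx hc')).antisymm (by
    linarith [dist_triangle z x c'])
  have hray : ∀ y, dist z y = 1 → dist x y = dist x c → SameRay ℝ (z - x) (x - y) := by
    intro y hzy hxy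
    rw [sameRay_iff_norm_add, sub_add_sub_cancel, ← dist_eq_norm, ← dist_eq_norm,
      ← dist_eq_norm, hzy, hxy, hzx, sub_add_cancel]
  have hzx_ne : z - x ≠ 0 := by
    rw [← norm_ne_zero_iff, ← dist_eq_norm, hzx]
    exact (sub_pos.2 hlt).ne'
  have hsub : x - c' = x - c := norm_injOn_ray_left hzx_ne (hray c' hzc' hxc') (hray c hzc rfl)
    (by rw [← dist_eq_norm, ← dist_eq_norm, hxc'])
  exact sub_right_injective hsub

theorem interior_inter_ballIntersection_subset [ProperSpace E] (hC : ballIntersection C 1 = C)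
    (hexp : bExp C ⊆ K) (d : ℝ) :
    interior C ∩ ballIntersection K d ⊆ ballIntersection C d := by
  rintro x ⟨hxC, hxK⟩
  have hCcomp := isCompact_of_ballIntersection_eq hC
  obtain ⟨c, hc, hmax⟩ := hCcomp.exists_isMaxOn ⟨x, interior_subset hxC⟩
    (f := fun c => dist x c) (by fun_prop)
  have hCx : C ⊆ closedBall x (dist x c) := fun _ hc' => mem_closedBall'.2 (hmax hc')
  have hlt : dist x c < 1 := by
    rw [← hC, interior_ballIntersection hCcomp.isClosed] at hxC
    exact mem_ball'.1 (hxC hc)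
  have hcK : c ∈ K := hexp (mem_bExp_of_subset_closedBall hc hCx hlt)
  exact mem_ballIntersection.2 (hCx.trans (closedBall_subset_closedBall
    (mem_closedBall'.1 (mem_ballIntersection.1 hxK hcK))))

theorem disjoint_frontier_of_bExp_subset [ProperSpace E] (hC : ballIntersection C 1 = C)
    (hK : IsClosed K) (hexp : bExp C ⊆ K) :
    Disjoint (frontier C) (interior (ballIntersection K 1)) := by
  have hCclosed := (isCompact_of_ballIntersection_eq hC).isClosed
  have hCconv : Convex ℝ C := hC ▸ convex_ballIntersection
  rw [disjoint_left]
  intro x hxC hxK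
  rw [interior_ballIntersection hK] at hxK
  obtain ⟨d, hd, hKd⟩ := exists_lt_subset_ball hK hxK
  have hxd : x ∈ interior (ballIntersection K d) := by rwa [interior_ballIntersection hK]
  have hxcl : x ∈ closure (interior C) := by
    rw [hCconv.closure_interior_eq_closure_of_nonempty_interior
      (interior_nonempty_of_ballIntersection_eq one_pos hC)]
    exact frontier_subset_closure hxC
  have hxCd : x ∈ ballIntersection C d := by
    refine closure_minimal ?_ isClosed_ballIntersection
      (isOpen_interior.inter_closure ⟨hxd, hxcl⟩)
    exact fun y hy => interior_inter_ballIntersection_subset hC hexp d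
      ⟨hy.2, interior_subset hy.1⟩
  refine hxC.2 ?_
  rw [← hC, interior_ballIntersection hCclosed]
  exact (mem_ballIntersection.1 hxCd).trans (closedBall_subset_ball hd)

end BallHull

theorem stmt_19 {E : Type*} [NormedAddCommGroup E] [NormedSpace ℝ E]
    [FiniteDimensional ℝ E] [Nontrivial E]
    (C : Set E) (hC : IsDiamComplete C) (hdiam : Metric.diam C = 1)
    (K : Set E) (hKC : K ⊆ C) (hKc : IsCompact K) (hKconv : Convex ℝ K)
    (hKne : K.Nonempty) :
    ((IsCompletion C K ∧ ∀ C' : Set E, IsCompletion C' K → C' = C) ↔ ballHull K = C) ∧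
    (ballHull K = C ↔ ∀ F : Set E, IsExposedBFace C F → (K ∩ F).Nonempty) ∧
    (StrictConvexSpace ℝ E →
      (ballHull K = C ↔ closure (convexHull ℝ (bExp C)) ⊆ K)) := by
  have hCfix : ballIntersection C 1 = C := hdiam ▸ hC.ballIntersection_diam_eq
  have hhull := ballHull_eq_iff_ballIntersection_eq (K := K) hCfix
  have hfrontier := ballIntersection_eq_iff_disjoint_frontier one_pos hCfix hKC
  have hfaces := forall_isExposedBFace_iff_disjoint_frontier hCfix hKc.isClosed hKC
  have hII_III := hhull.trans (hfrontier.trans hfaces.symm)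
  refine ⟨?_, hII_III, fun _ => ⟨fun h => ?_, fun h => ?_⟩⟩
  · rw [unique_completion_iff_ballIntersection_eq hC hKC, hdiam, hhull]
  · exact closure_minimal
      (convexHull_min (bExp_subset_of_forall_isExposedBFace (hII_III.1 h)) hKconv) hKc.isClosed
  · have hexp : bExp C ⊆ K := ((subset_convexHull ℝ (bExp C)).trans subset_closure).trans h
    exact hhull.2 (hfrontier.2 (disjoint_frontier_of_bExp_subset hCfix hKc.isClosed hexp))
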